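/- arXiv:2012.06610 — 3 statements merged into one kernel-verified Lean document; each statement's English description precedes it below -/
import Mathlib

section
/- For every γ > 0, √γ · ∫₀¹ y · ( cosh(√γ·y) · (∫₀¹ s·cosh(√γ·(1−s)) ds) / sinh(√γ) − ∫₀ʸ s·sinh(√γ·(y−s)) ds ) dy = 1/3 − 1/γ + 2·tanh(√γ/2)/γ^{3/2}. Consequently, for the linear random shear flow v(y, ξ(t)) = y·ξ(t) with ξ a stationary Ornstein–Uhlenbeck process of damping γ, the nondimensional effective diffusivity κ_eff = (λ⁽²⁾ − λ⁽¹,¹⁾)/2 equals 1 + Pe²·( 1/24 − 1/(2γ) + tanh(√γ/2)/γ^{3/2} ). -/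
/-!
Write `a = √γ`. Integration by parts evaluates the two inner integrals,
`∫₀¹ s cosh (a (1 - s)) ds = (cosh a - 1) / a²` and
`∫₀ʸ s sinh (a (y - s)) ds = sinh (a y) / a² - y / a`,
and then `∫₀¹ y cosh (a y) dy` and `∫₀¹ y sinh (a y) dy` evaluate the outer one. What remains is
`1/3 - 1/a² + (sinh² a - (cosh a - 1)²) / (a³ sinh a)`. The numerator equals `2 (cosh a - 1)`, and
`(cosh a - 1) / sinh a = tanh (a / 2)` gives the closed form. The effective diffusivity
follows from `∫₀¹ y dy = 1/2`. Every integral is computed from an explicit antiderivative.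
-/


open MeasureTheory Real Set

theorem integral_mul_cosh_sub (a : ℝ) (ha : a ≠ 0) :
    ∫ s in (0:ℝ)..1, s * Real.cosh (a * (1 - s)) = (Real.cosh a - 1) / a ^ 2 := by
  have hd : ∀ s ∈ uIcc (0:ℝ) 1, HasDerivAt
      (fun s => -(s * Real.sinh (a * (1 - s))) / a - Real.cosh (a * (1 - s)) / a ^ 2)
      (s * Real.cosh (a * (1 - s))) s := by
    intro s _
    have h1 : HasDerivAt (fun s : ℝ => a * (1 - s)) (a * (-1)) s :=
      ((hasDerivAt_id s).const_sub 1).const_mul a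
    refine HasDerivAt.congr_deriv ((((hasDerivAt_id s).mul h1.sinh).neg.div_const a).sub
      (h1.cosh.div_const (a ^ 2))) ?_
    simp only [id]
    field_simp
    ring
  rw [intervalIntegral.integral_eq_sub_of_hasDerivAt hd
    (Continuous.intervalIntegrable (by fun_prop) _ _)]
  simp
  ring

theorem integral_mul_sinh_sub (a y : ℝ) (ha : a ≠ 0) :
    ∫ s in (0:ℝ)..y, s * Real.sinh (a * (y - s)) = Real.sinh (a * y) / a ^ 2 - y / a := by
  have hd : ∀ s ∈ uIcc (0:ℝ) y, HasDerivAt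
      (fun s => -(s * Real.cosh (a * (y - s))) / a - Real.sinh (a * (y - s)) / a ^ 2)
      (s * Real.sinh (a * (y - s))) s := by
    intro s _
    have h1 : HasDerivAt (fun s : ℝ => a * (y - s)) (a * (-1)) s :=
      ((hasDerivAt_id s).const_sub y).const_mul a
    refine HasDerivAt.congr_deriv ((((hasDerivAt_id s).mul h1.cosh).neg.div_const a).sub
      (h1.sinh.div_const (a ^ 2))) ?_
    simp only [id]
    field_simp
    ring
  rw [intervalIntegral.integral_eq_sub_of_hasDerivAt hd
    (Continuous.intervalIntegrable (by fun_prop) _ _)]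
  simp
  ring

/-- The outer integral once both inner integrals are known; `C` stands for the coefficient
`(cosh a - 1) / (a² sinh a)` of `cosh (a y)`, which does not depend on `y`. -/
theorem integral_outer (a C : ℝ) (ha : a ≠ 0) :
    ∫ y in (0:ℝ)..1, y * (Real.cosh (a * y) * C - (Real.sinh (a * y) / a ^ 2 - y / a)) =
      C * (Real.sinh a / a - (Real.cosh a - 1) / a ^ 2)
        - (Real.cosh a / a - Real.sinh a / a ^ 2) / a ^ 2 + 1 / (3 * a) := by
  have hd : ∀ y ∈ uIcc (0:ℝ) 1, HasDerivAt
      (fun y => C * (y * Real.sinh (a * y) / a - Real.cosh (a * y) / a ^ 2)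
        - (y * Real.cosh (a * y) / a - Real.sinh (a * y) / a ^ 2) / a ^ 2 + y ^ 3 / (3 * a))
      (y * (Real.cosh (a * y) * C - (Real.sinh (a * y) / a ^ 2 - y / a))) y := by
    intro y _
    have h1 : HasDerivAt (fun y : ℝ => a * y) (a * 1) y := (hasDerivAt_id y).const_mul a
    refine HasDerivAt.congr_deriv (((((((hasDerivAt_id y).mul h1.sinh).div_const a).sub
      (h1.cosh.div_const (a ^ 2))).const_mul C).sub
      (((((hasDerivAt_id y).mul h1.cosh).div_const a).sub
      (h1.sinh.div_const (a ^ 2))).div_const (a ^ 2))).add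
      ((hasDerivAt_pow 3 y).div_const (3 * a))) ?_
    simp only [id]
    field_simp
    push_cast
    ring
  rw [intervalIntegral.integral_eq_sub_of_hasDerivAt hd
    (Continuous.intervalIntegrable (by fun_prop) _ _)]
  simp
  ring

theorem tanh_half (a : ℝ) (ha : 0 < a) :
    Real.tanh (a / 2) = (Real.cosh a - 1) / Real.sinh a := by
  have hs : Real.sinh (a / 2) ≠ 0 := (Real.sinh_pos_iff.2 (by positivity)).ne'
  have hc : Real.cosh (a / 2) ≠ 0 := (Real.cosh_pos _).ne'
  have h1 : Real.cosh a = Real.cosh (a / 2) ^ 2 + Real.sinh (a / 2) ^ 2 := by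
    rw [← Real.cosh_two_mul]; congr 1; ring
  have h2 : Real.sinh a = 2 * Real.sinh (a / 2) * Real.cosh (a / 2) := by
    rw [← Real.sinh_two_mul]; congr 1; ring
  rw [h1, h2, Real.tanh_eq_sinh_div_cosh, Real.cosh_sq]
  field_simp
  ring

/-- Explicit evaluation of the resolvent integral for the linear shear `u(y) = y`,
and the resulting effective diffusivity
`κ_eff = 1 + Pe²·(1/24 - 1/(2γ) + tanh(√γ/2)/γ^{3/2})`. -/
theorem stmt_6 (Pe : ℝ) (hPe : 0 < Pe) (γ : ℝ) (hγ : 0 < γ) :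
    Real.sqrt γ *
      (∫ y in (0:ℝ)..1, y *
        (Real.cosh (Real.sqrt γ * y) *
            (∫ s in (0:ℝ)..1, s * Real.cosh (Real.sqrt γ * (1 - s))) /
          Real.sinh (Real.sqrt γ) -
        ∫ s in (0:ℝ)..y, s * Real.sinh (Real.sqrt γ * (y - s)))) =
      1/3 - 1/γ + 2 * Real.tanh (Real.sqrt γ / 2) / γ ^ ((3:ℝ)/2) ∧
    ((2 + Pe^2 * Real.sqrt γ *
      (∫ y in (0:ℝ)..1, y *
        (Real.cosh (Real.sqrt γ * y) *
            (∫ s in (0:ℝ)..1, s * Real.cosh (Real.sqrt γ * (1 - s))) /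
          Real.sinh (Real.sqrt γ) -
        ∫ s in (0:ℝ)..y, s * Real.sinh (Real.sqrt γ * (y - s)))))
      - Pe^2 * (∫ y in (0:ℝ)..1, y)^2) / 2 =
      1 + Pe^2 * (1/24 - 1/(2*γ) + Real.tanh (Real.sqrt γ / 2) / γ ^ ((3:ℝ)/2)) := by
  have ha : 0 < √γ := Real.sqrt_pos.2 hγ
  have hpow : γ ^ ((3:ℝ)/2) = √γ ^ 3 := by
    rw [Real.sqrt_eq_rpow, ← Real.rpow_natCast, ← Real.rpow_mul hγ.le]
    norm_num
  have hsq : √γ ^ 2 = γ := Real.sq_sqrt hγ.le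
  rw [hpow]
  set a := √γ with ha_def
  have hs : Real.sinh a ≠ 0 := (Real.sinh_pos_iff.2 ha).ne'
  have key : a * (∫ y in (0:ℝ)..1, y *
        (Real.cosh (a * y) * (∫ s in (0:ℝ)..1, s * Real.cosh (a * (1 - s))) / Real.sinh a -
        ∫ s in (0:ℝ)..y, s * Real.sinh (a * (y - s)))) =
      1/3 - 1/γ + 2 * Real.tanh (a / 2) / a ^ 3 := by
    simp only [integral_mul_cosh_sub a ha.ne', integral_mul_sinh_sub a _ ha.ne', mul_div_assoc]
    rw [integral_outer a _ ha.ne', tanh_half a ha, ← hsq]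
    field_simp
    linear_combination (-3) * Real.cosh_sq a
  refine ⟨key, ?_⟩
  have h12 : ∫ y in (0:ℝ)..1, y = 1 / 2 := by norm_num [integral_id]
  rw [mul_assoc (Pe ^ 2), key, h12]
  ring
end

section
/- Let X be a real standard Gaussian random variable (mean 0, variance 1) and let Θ be uniformly distributed on [0, 2π], with X and Θ independent. Then the law of T̃ = X·cos(Θ) is absolutely continuous with respect to Lebesgue measure with density f(z) = e^{−z²/4} · K₀(z²/4) / ( √2 · π^{3/2} ) for z ≠ 0, where K₀(w) = ∫₀^∞ exp(−w·cosh t) dt. (This is the long-time invariant measure of the rescaled passive scalar for Gaussian random wave initial data with nonzero mean flow ū ≠ 0.) -/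
open MeasureTheory ProbabilityTheory Real Set

/-!
Conditionally on `Θ = θ`, the product `X cos Θ` is a centred Gaussian of variance `cos² θ`, so by
Tonelli the law of `X cos Θ` has density
`z ↦ (2π)⁻¹ ∫₀^{2π} (2π cos² θ)^{-1/2} exp (-z² / (2 cos² θ)) dθ`
(the phases with `cos θ = 0` are negligible).

The integrand has period `π`, hence the integral is twice that over `(-π/2, π/2)`
(`lintegral_cos_sq_Icc`). The Gudermannian substitution `θ = arctan (sinh (s / 2))`, a bijection
from `ℝ` onto `(-π/2, π/2)` with `cos θ = 1 / cosh (s / 2)` and `dθ = ds / (2 cosh (s / 2))`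
(`lintegral_gudermannian`), cancels the factor `1 / cos θ`, and the identity
`2 cosh² (s / 2) = 1 + cosh s` turns the exponent into `-z²/4 - (z²/4) cosh s`
(`gudermannian_integrand`). Since `cosh` is even, what remains is twice the integral defining `K₀`
(`lintegral_exp_neg_mul_cosh`).
-/

/-- A function of `cos² θ` has period `π`, so its integral over a full turn is twice that over the
half turn on which the cosine is positive. -/
lemma lintegral_cos_sq_Icc (G : ℝ → ENNReal) :
    ∫⁻ θ in Icc 0 (2 * π), G (cos θ ^ 2) =
      2 * ∫⁻ θ in Ioo (-(π / 2)) (π / 2), G (cos θ ^ 2) := by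
  have hper : Function.Periodic (fun θ => G (cos θ ^ 2)) π := by
    intro θ
    simp [cos_add_pi]
  have hdom : ∀ t : ℝ, ∫⁻ θ in Ioc t (t + π), G (cos θ ^ 2) =
      ∫⁻ θ in Ioo (-(π / 2)) (π / 2), G (cos θ ^ 2) := by
    intro t
    have : VAddInvariantMeasure (AddSubgroup.zmultiples π) ℝ volume :=
      ⟨fun c s _ => measure_preimage_add _ _ _⟩
    have h := (isAddFundamentalDomain_Ioc pi_pos t).setLIntegral_eq
      (isAddFundamentalDomain_Ioc pi_pos (-(π / 2))) (fun θ => G (cos θ ^ 2))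
      hper.map_vadd_zmultiples
    rw [show -(π / 2) + π = π / 2 by ring] at h
    exact h.trans (setLIntegral_congr Ioo_ae_eq_Ioc.symm)
  rw [setLIntegral_congr Ioc_ae_eq_Icc.symm,
    ← Ioc_union_Ioc_eq_Ioc pi_pos.le (show π ≤ 2 * π by linarith [pi_pos]),
    lintegral_union measurableSet_Ioc (Ioc_disjoint_Ioc_of_le le_rfl)]
  have h0 := hdom 0
  have h1 := hdom π
  rw [zero_add] at h0
  rw [← two_mul] at h1
  rw [h0, h1, two_mul]

/-- Change of variables `θ = arctan (sinh (s / 2))`. -/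
lemma lintegral_gudermannian (F : ℝ → ENNReal) :
    ∫⁻ θ in Ioo (-(π / 2)) (π / 2), F θ =
      ∫⁻ s, ENNReal.ofReal (1 / (2 * cosh (s / 2))) * F (arctan (sinh (s / 2))) := by
  have himg : (fun s : ℝ => arctan (sinh (s / 2))) '' univ = Ioo (-(π / 2)) (π / 2) := by
    rw [image_univ, ← range_arctan]
    refine Function.Surjective.range_comp (f := fun s : ℝ => sinh (s / 2)) (fun y => ?_) arctan
    exact ⟨2 * arsinh y, by simp⟩
  have hder : ∀ s : ℝ, HasDerivAt (fun s : ℝ => arctan (sinh (s / 2)))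
      (1 / (2 * cosh (s / 2))) s := by
    intro s
    have h := (((hasDerivAt_id s).div_const 2).sinh).arctan
    refine h.congr_deriv ?_
    have hc := cosh_pos (s / 2)
    have h1 : 1 + sinh (s / 2) ^ 2 = cosh (s / 2) ^ 2 := by rw [cosh_sq]; ring
    simp only [id]
    rw [h1]
    field_simp
  have hinj : InjOn (fun s : ℝ => arctan (sinh (s / 2))) univ := by
    intro a _ b _ hab
    have := sinh_injective (arctan_injective hab)
    linarith
  rw [← himg, lintegral_image_eq_lintegral_abs_deriv_mul MeasurableSet.univ
    (fun s _ => (hder s).hasDerivWithinAt) hinj, Measure.restrict_univ]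
  refine lintegral_congr fun s => ?_
  rw [abs_of_pos (by have := cosh_pos (s / 2); positivity)]

/-- Under `θ = arctan (sinh (s / 2))` the Jacobian cancels the factor `1 / cos θ` of the Gaussian
density, leaving a constant multiple of the integrand of `K₀` at `z ^ 2 / 4`. -/
lemma gudermannian_integrand (z s : ℝ) :
    ENNReal.ofReal (1 / (2 * cosh (s / 2))) *
        gaussianPDF 0 (Real.toNNReal (cos (arctan (sinh (s / 2))) ^ 2)) z =
      ENNReal.ofReal (exp (-z ^ 2 / 4) / (2 * √(2 * π))) *
        ENNReal.ofReal (exp (-(z ^ 2 / 4) * cosh s)) := by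
  have hc := cosh_pos (s / 2)
  have h1 : 1 + sinh (s / 2) ^ 2 = cosh (s / 2) ^ 2 := by rw [cosh_sq]; ring
  have hcosh : cosh s = 2 * cosh (s / 2) ^ 2 - 1 := by
    have h := cosh_two_mul (s / 2)
    rw [show 2 * (s / 2) = s by ring] at h
    linarith
  rw [gaussianPDF, gaussianPDFReal, cos_sq_arctan, h1, coe_toNNReal _ (by positivity),
    ← ENNReal.ofReal_mul (by positivity), ← ENNReal.ofReal_mul (by positivity)]
  congr 1
  have hs : √(2 * π * (1 / cosh (s / 2) ^ 2)) = √(2 * π) / cosh (s / 2) := by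
    rw [sqrt_mul (by positivity), sqrt_div zero_le_one, sqrt_sq hc.le, sqrt_one]
    ring
  have he : -(z - 0) ^ 2 / (2 * (1 / cosh (s / 2) ^ 2)) =
      -z ^ 2 / 4 + -(z ^ 2 / 4) * cosh s := by
    rw [hcosh]
    field_simp
    ring
  rw [hs, he, exp_add]
  have : 0 < √(2 * π) := by positivity
  field_simp

lemma integrableOn_exp_neg_mul_cosh {w : ℝ} (hw : 0 < w) :
    IntegrableOn (fun t => exp (-w * cosh t)) (Ioi 0) := by
  refine (integrableOn_exp_mul_Ioi (neg_neg_of_pos hw) 0).mono' (by fun_prop) ?_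
  refine (ae_restrict_mem measurableSet_Ioi).mono fun t ht => ?_
  have h1 : t ≤ cosh t := (self_le_sinh_iff.2 (le_of_lt ht)).trans (sinh_lt_cosh t).le
  rw [norm_of_nonneg (exp_pos _).le]
  exact exp_le_exp.2 (by nlinarith)

lemma lintegral_exp_neg_mul_cosh {w : ℝ} (hw : 0 < w) :
    ∫⁻ s, ENNReal.ofReal (exp (-w * cosh s)) =
      2 * ENNReal.ofReal (∫ t in Ioi (0 : ℝ), exp (-w * cosh t)) := by
  have hIoi := ofReal_integral_eq_lintegral_ofReal (integrableOn_exp_neg_mul_cosh hw)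
    (ae_of_all _ fun t => (exp_pos _).le)
  -- Parity of `cosh`, through the reflection `s ↦ -s`.
  have hIic : ∫⁻ s in Iic (0 : ℝ), ENNReal.ofReal (exp (-w * cosh s)) =
      ∫⁻ s in Ioi (0 : ℝ), ENNReal.ofReal (exp (-w * cosh s)) := by
    rw [← setLIntegral_congr (Iio_ae_eq_Iic (a := (0 : ℝ)))]
    have h := (Measure.measurePreserving_neg (volume : Measure ℝ)).setLIntegral_comp_preimage_emb
      (Homeomorph.neg ℝ).measurableEmbedding
      (fun s => ENNReal.ofReal (exp (-w * cosh s))) (Ioi 0)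
    simpa using h
  rw [hIoi, ← lintegral_add_compl _ (measurableSet_Ioi (a := (0 : ℝ))), compl_Ioi, hIic, two_mul]

/-- The average over the phase of the centred Gaussian densities of variance `cos² θ`. The point
`z = 0` is excluded because the integral defining `K₀` diverges there. -/
lemma lintegral_gaussianPDF_cos_sq {z : ℝ} (hz : z ≠ 0) :
    ENNReal.ofReal (2 * π)⁻¹ *
        ∫⁻ θ in Icc 0 (2 * π), gaussianPDF 0 (Real.toNNReal (cos θ ^ 2)) z =
      ENNReal.ofReal (exp (-z ^ 2 / 4) * (∫ t in Ioi (0 : ℝ), exp (-(z ^ 2 / 4) * cosh t)) /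
        (√2 * π ^ ((3 : ℝ) / 2))) := by
  rw [lintegral_cos_sq_Icc (fun v => gaussianPDF 0 (Real.toNNReal v) z), lintegral_gudermannian]
  simp_rw [gudermannian_integrand]
  rw [lintegral_const_mul _ (by fun_prop), lintegral_exp_neg_mul_cosh (by positivity)]
  set K := ∫ t in Ioi (0 : ℝ), exp (-(z ^ 2 / 4) * cosh t)
  have h2 : (2 : ENNReal) = ENNReal.ofReal 2 := by simp
  rw [h2, ← ENNReal.ofReal_mul (by positivity), ← ENNReal.ofReal_mul (by positivity),
    ← ENNReal.ofReal_mul (by positivity), ← ENNReal.ofReal_mul (by positivity)]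
  congr 1
  have hp : π ^ ((3 : ℝ) / 2) = π * √π := by
    rw [show (3 : ℝ) / 2 = 1 + 1 / 2 by norm_num, rpow_add pi_pos, rpow_one, sqrt_eq_rpow]
  rw [hp, sqrt_mul zero_le_two]
  have := pi_pos
  field_simp

lemma ae_cos_ne_zero : ∀ᵐ θ : ℝ, cos θ ≠ 0 := by
  have hc : {θ : ℝ | cos θ = 0}.Countable := by
    refine (countable_range fun k : ℤ => (2 * (k : ℝ) + 1) * π / 2).mono fun θ hθ => ?_
    obtain ⟨k, hk⟩ := cos_eq_zero_iff.1 hθ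
    exact ⟨k, hk.symm⟩
  exact hc.ae_notMem volume

/-- Invariant measure for Gaussian random wave initial data with nonzero mean
flow: if `X` is standard Gaussian and `Θ` is an independent uniform phase on
`[0, 2π]`, then `T̃ = X·cos Θ` has law absolutely continuous with respect to
Lebesgue measure with density `f(z) = e^{-z²/4}·K₀(z²/4)/(√2·π^{3/2})`, where
`K₀(w) = ∫₀^∞ exp(-w·cosh t) dt`. -/
theorem stmt_13 {Ω : Type*} [MeasurableSpace Ω] (μ : Measure Ω)
    [IsProbabilityMeasure μ] (X Θ : Ω → ℝ) (hXm : Measurable X)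
    (hΘm : Measurable Θ)
    (hX : Measure.map X μ = gaussianReal 0 1)
    (hΘ : Measure.map Θ μ =
      (ENNReal.ofReal (2 * Real.pi)⁻¹) •
        volume.restrict (Set.Icc (0:ℝ) (2 * Real.pi)))
    (hindep : IndepFun X Θ μ) :
    Measure.map (fun ω => X ω * Real.cos (Θ ω)) μ =
      volume.withDensity (fun z => ENNReal.ofReal
        (Real.exp (-z^2/4) *
          (∫ t in Set.Ioi (0:ℝ), Real.exp (-(z^2/4) * Real.cosh t)) /
          (Real.sqrt 2 * Real.pi ^ ((3:ℝ)/2)))) := by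
  have hmul : Measurable fun p : ℝ × ℝ => p.1 * cos p.2 := by fun_prop
  have hlaw : Measure.map (fun ω => X ω * cos (Θ ω)) μ =
      Measure.map (fun p : ℝ × ℝ => p.1 * cos p.2) ((μ.map X).prod (μ.map Θ)) := by
    rw [← (indepFun_iff_map_prod_eq_prod_map_map hXm.aemeasurable hΘm.aemeasurable).1 hindep,
      Measure.map_map hmul (hXm.prodMk hΘm)]
    rfl
  have : IsProbabilityMeasure (μ.map Θ) := Measure.isProbabilityMeasure_map hΘm.aemeasurable
  ext A hA
  rw [hlaw, Measure.map_apply hmul hA, Measure.prod_apply_symm (hmul hA), withDensity_apply _ hA,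
    hX, hΘ, lintegral_smul_measure]
  -- Given the phase `θ`, the product is `N(0, cos² θ)`, which has a density unless `cos θ = 0`.
  have hcond : ∀ᵐ θ ∂volume.restrict (Icc 0 (2 * π)),
      gaussianReal 0 1 ((fun x => (x, θ)) ⁻¹' ((fun p : ℝ × ℝ => p.1 * cos p.2) ⁻¹' A)) =
        ∫⁻ z in A, gaussianPDF 0 (Real.toNNReal (cos θ ^ 2)) z := by
    filter_upwards [ae_restrict_of_ae ae_cos_ne_zero] with θ hθ
    have h := gaussianReal_map_const_mul (μ := 0) (v := 1) (cos θ)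
    have hv : NNReal.mk (cos θ ^ 2) (sq_nonneg _) * 1 = Real.toNNReal (cos θ ^ 2) := by
      rw [mul_one]
      exact (Real.toNNReal_of_nonneg (sq_nonneg _)).symm
    rw [hv, mul_zero] at h
    rw [← gaussianReal_apply _ (by simpa using hθ) A, ← h,
      Measure.map_apply (by fun_prop) hA]
    simp only [preimage_preimage, mul_comm]
  have hmeas : Measurable fun p : ℝ × ℝ =>
      gaussianPDF 0 (Real.toNNReal (cos p.1 ^ 2)) p.2 := by
    unfold gaussianPDF gaussianPDFReal
    fun_prop
  rw [lintegral_congr_ae hcond, lintegral_lintegral_swap hmeas.aemeasurable, smul_eq_mul,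
    ← lintegral_const_mul _ hmeas.lintegral_prod_left']
  refine lintegral_congr_ae (ae_restrict_of_ae ?_)
  filter_upwards [Measure.ae_ne volume (0 : ℝ)] with z hz
  exact lintegral_gaussianPDF_cos_sq hz
end

section
/- For every real z ≠ 0, (1/(2π)) · ∫₀^{2π} (1/(√(2π)·|cos θ|)) · exp( −z²/(2·cos²θ) ) dθ = e^{−z²/4} · ( ∫₀^∞ exp(−(z²/4)·cosh t) dt ) / ( √2 · π^{3/2} ). (This is the law-of-total-probability evaluation f_{T̃}(z) = ∫₀^{2π} f_{T̃|η}(z|η=h) f_η(h) dh = e^{−z²/4}K₀(z²/4)/(√2 π^{3/2}) for the random wave invariant measure.) -/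
open MeasureTheory Real Set

/-!
The integrand has period `π`, so the integral over `[0, 2π]` is twice the integral over
`(-π/2, π/2)`. The Gudermannian substitution `θ = arctan (sinh s)` maps `ℝ` bijectively onto
`(-π/2, π/2)`, with `cos θ = 1 / cosh s` and `dθ = ds / cosh s`; it cancels the factor
`1 / |cos θ|` and leaves `∫ s, exp (-z² cosh² s / 2)` over `ℝ`. As
`cosh² s = (1 + cosh (2 s)) / 2`, this is `exp (-z²/4) ∫ s, exp (-(z²/4) cosh (2 s))`, and
rescaling by `2` together with evenness of `cosh` gives `exp (-z²/4) K₀(z²/4)`.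
-/

/-- The density at `z` of a centred Gaussian of standard deviation `|u|`, without the constant
`1 / √(2π)`; division by zero makes it `0` at `u = 0`. -/
noncomputable def gaussDens (z u : ℝ) : ℝ := 1 / |u| * Real.exp (-z ^ 2 / (2 * u ^ 2))

/-- For `z ≠ 0` the Gaussian factor beats the pole at `u = 0`, by `exp (-x) ≤ 1 / x`. -/
lemma gaussDens_le {z : ℝ} (hz : z ≠ 0) {u : ℝ} (hu : |u| ≤ 1) :
    |gaussDens z u| ≤ 2 / z ^ 2 := by
  have hz2 : 0 < z ^ 2 := by positivity
  rcases eq_or_ne u 0 with rfl | h0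
  · simp [gaussDens]; positivity
  have hu0 : 0 < |u| := abs_pos.mpr h0
  have hx : 0 < z ^ 2 / (2 * |u| ^ 2) := by positivity
  have hexp : Real.exp (-(z ^ 2 / (2 * |u| ^ 2))) ≤ (z ^ 2 / (2 * |u| ^ 2))⁻¹ := by
    rw [Real.exp_neg]
    exact inv_anti₀ hx (by linarith [Real.add_one_le_exp (z ^ 2 / (2 * |u| ^ 2))])
  unfold gaussDens
  rw [abs_of_nonneg (by positivity), ← sq_abs u, neg_div]
  calc 1 / |u| * Real.exp (-(z ^ 2 / (2 * |u| ^ 2)))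
      ≤ 1 / |u| * (z ^ 2 / (2 * |u| ^ 2))⁻¹ := by gcongr
    _ = 2 / z ^ 2 * |u| := by field_simp
    _ ≤ 2 / z ^ 2 * 1 := by gcongr
    _ = 2 / z ^ 2 := mul_one _

lemma intervalIntegrable_gaussDens_cos {z : ℝ} (hz : z ≠ 0) (a b : ℝ) :
    IntervalIntegrable (fun θ => gaussDens z (Real.cos θ)) volume a b := by
  have hm : Measurable (fun θ => gaussDens z (Real.cos θ)) := by
    unfold gaussDens
    fun_prop
  refine (intervalIntegrable_const (c := 2 / z ^ 2)).mono_fun hm.aestronglyMeasurable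
    (Filter.Eventually.of_forall fun θ => ?_)
  exact (gaussDens_le hz (Real.abs_cos_le_one θ)).trans (le_abs_self _)

lemma integral_gaussDens_cos_two_pi {z : ℝ} (hz : z ≠ 0) :
    ∫ θ in (0:ℝ)..(2 * π), gaussDens z (Real.cos θ) =
      2 * ∫ θ in Ioo (-(π / 2)) (π / 2), gaussDens z (Real.cos θ) := by
  have hp : Function.Periodic (fun θ => gaussDens z (Real.cos θ)) π := fun θ => by
    simp [gaussDens, Real.cos_add_pi]
  have h1 := hp.intervalIntegral_add_eq 0 (-(π / 2))
  have h2 := hp.intervalIntegral_add_eq π (-(π / 2))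
  rw [zero_add] at h1
  rw [← intervalIntegral.integral_add_adjacent_intervals
    (intervalIntegrable_gaussDens_cos hz 0 π) (intervalIntegrable_gaussDens_cos hz π (2 * π)),
    h1, two_mul π, h2, show -(π / 2) + π = π / 2 by ring,
    intervalIntegral.integral_of_le (by linarith [pi_pos]), integral_Ioc_eq_integral_Ioo]
  ring

lemma cos_arctan_sinh (s : ℝ) : Real.cos (arctan (sinh s)) = 1 / cosh s := by
  rw [Real.cos_arctan, add_comm, ← Real.cosh_sq, Real.sqrt_sq (Real.cosh_pos s).le]

lemma hasDerivAt_arctan_sinh (s : ℝ) :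
    HasDerivAt (fun s => arctan (sinh s)) (1 / cosh s) s := by
  convert (Real.hasDerivAt_sinh s).arctan using 1
  rw [add_comm, ← Real.cosh_sq]
  have := (Real.cosh_pos s).ne'
  field_simp

/-- Gudermannian substitution `θ = arctan (sinh s)`. -/
lemma integral_gaussDens_cos_eq (z : ℝ) :
    ∫ θ in Ioo (-(π / 2)) (π / 2), gaussDens z (Real.cos θ) =
      ∫ s : ℝ, Real.exp (-z ^ 2 / 2 * cosh s ^ 2) := by
  have himg : (fun s => arctan (sinh s)) '' univ = Ioo (-(π / 2)) (π / 2) := by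
    rw [image_univ, ← Real.range_arctan]
    exact Real.sinh_surjective.range_comp arctan
  have hinj : InjOn (fun s => arctan (sinh s)) univ :=
    (Real.arctan_injective.comp Real.sinh_injective).injOn
  rw [← himg, integral_image_eq_integral_abs_deriv_smul MeasurableSet.univ
    (fun s _ => (hasDerivAt_arctan_sinh s).hasDerivWithinAt) hinj, setIntegral_univ]
  congr 1 with s
  have hc := Real.cosh_pos s
  rw [cos_arctan_sinh, gaussDens, smul_eq_mul, abs_of_pos (by positivity)]
  rw [show -z ^ 2 / (2 * (1 / cosh s) ^ 2) = -z ^ 2 / 2 * cosh s ^ 2 by field_simp]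
  field_simp

lemma integral_exp_cosh_sq (z : ℝ) :
    ∫ s : ℝ, Real.exp (-z ^ 2 / 2 * cosh s ^ 2) =
      Real.exp (-z ^ 2 / 4) * ∫ t in Ioi (0:ℝ), Real.exp (-(z ^ 2 / 4) * cosh t) := by
  have h1 : ∀ s : ℝ, Real.exp (-z ^ 2 / 2 * cosh s ^ 2) =
      Real.exp (-z ^ 2 / 4) * Real.exp (-(z ^ 2 / 4) * cosh (2 * s)) := fun s => by
    rw [← Real.exp_add, Real.cosh_two_mul, Real.sinh_sq]
    ring_nf
  have h2 := integral_comp_abs (f := fun t => Real.exp (-(z ^ 2 / 4) * cosh t))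
  simp only [Real.cosh_abs] at h2
  simp_rw [h1]
  rw [integral_const_mul,
    Measure.integral_comp_mul_left (fun t => Real.exp (-(z ^ 2 / 4) * cosh t)) 2, h2,
    smul_eq_mul, abs_of_pos (by norm_num)]
  ring

/-- Law-of-total-probability evaluation of the random-wave invariant density:
for `z ≠ 0`,
`(1/2π)·∫₀^{2π} (1/(√(2π)|cos θ|))·exp(-z²/(2cos²θ)) dθ
  = e^{-z²/4}·K₀(z²/4)/(√2·π^{3/2})`,
where `K₀(w) = ∫₀^∞ exp(-w·cosh t) dt`. -/
theorem stmt_14 (z : ℝ) (hz : z ≠ 0) :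
    (1 / (2 * Real.pi)) *
      (∫ θ in (0:ℝ)..(2 * Real.pi),
        (1 / (Real.sqrt (2 * Real.pi) * |Real.cos θ|)) *
          Real.exp (-z^2 / (2 * (Real.cos θ)^2))) =
    Real.exp (-z^2/4) *
      (∫ t in Set.Ioi (0:ℝ), Real.exp (-(z^2/4) * Real.cosh t)) /
      (Real.sqrt 2 * Real.pi ^ ((3:ℝ)/2)) := by
  have hpi : π ^ ((3:ℝ) / 2) = π * √π := by
    rw [show (3:ℝ) / 2 = 1 + 1 / 2 by norm_num, Real.rpow_add pi_pos, Real.rpow_one,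
      ← Real.sqrt_eq_rpow]
  have hint : ∀ θ : ℝ, (1 / (√(2 * π) * |Real.cos θ|)) *
      Real.exp (-z ^ 2 / (2 * (Real.cos θ) ^ 2)) =
      1 / √(2 * π) * gaussDens z (Real.cos θ) := fun θ => by
    rw [gaussDens, ← mul_assoc, one_div_mul_one_div]
  simp_rw [hint]
  rw [intervalIntegral.integral_const_mul, integral_gaussDens_cos_two_pi hz,
    integral_gaussDens_cos_eq, integral_exp_cosh_sq, hpi, Real.sqrt_mul zero_le_two]
  have := Real.sqrt_pos.mpr pi_pos
  field_simp
end
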